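/- Let X be a decomposable continuum with the property of Kelley such that F_1(X) ⊆ NB(F_1(X)) and NB(F_1(X)) is compact. Then for every A ∈ NB(F_1(X)), the complement X \ A is connected by continua: any two points of X \ A lie in a common subcontinuum of X contained in X \ A. -/

import Mathlib

/-!
Say that two points are in the same class if a subcontinuum avoiding the nonblocker `A` contains
both. If there is more than one class off `A`, then every class is meagre and dense, and this makes
every nonempty finite set a nonblocker. Since such sets are dense in the hyperspace and `NB X` is
closed, every nonempty compact set is then a nonblocker, which is absurd: a nonblocker other than
`X` has empty interior.

To show that finite sets are nonblockers, let `B` be a blocking finite set of least cardinality and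
let `z ∉ B` be such that `kappa B {z}` is not dense. By minimality and boundary bumping, the
continuum `R = closure (kappa B {z})` contains `B`. By the property of Kelley, `R` meets, off `A`,
only the classes of points of `B`. Since `NB X` is closed, moving two points `p`, `b` of `B`
slightly gives another minimal blocking set. Move `p` to some `p' ∈ kappa B {z}`, and `b` in turn
to infinitely many points `f n` in distinct new classes, and let `R n` be the continuum that
belongs to the `n`-th perturbed set. Then `f m ∉ R n` for `m ≠ n`, and `f n ∉ R`. Were every point
of `B ∩ R n` in the perturbed set, `p'` could be joined inside `R n`, off `B`, to points close to
`f n`, forcing `f n ∈ R`. So each `R n` contains a point of the finite set `B` outside the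
perturbed set. Two of the continua `R m`, `R n` share this point, from which the same argument
gives `f m ∈ R n`.
-/

open Set Metric Filter Topology TopologicalSpace

/-- A subcontinuum: a nonempty compact connected subset. -/
def IsSubcontinuum {X : Type*} [TopologicalSpace X] (K : Set X) : Prop :=
  IsCompact K ∧ IsConnected K

/-- `kappa A B` : the union of all subcontinua meeting `B` and avoiding `A`. -/
def kappa {X : Type*} [TopologicalSpace X] (A B : Set X) : Set X :=
  ⋃₀ {L | IsSubcontinuum L ∧ (L ∩ B).Nonempty ∧ L ⊆ Aᶜ}

/-- A continuum is decomposable if it is the union of two proper subcontinua. -/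
def Decomposable (X : Type*) [TopologicalSpace X] : Prop :=
  ∃ M N : Set X, IsSubcontinuum M ∧ IsSubcontinuum N ∧
    M ≠ univ ∧ N ≠ univ ∧ M ∪ N = univ

/-- The property of Kelley. -/
def KelleyProp (X : Type*) [MetricSpace X] : Prop :=
  ∀ (x : ℕ → X) (x₀ : X), Tendsto x atTop (𝓝 x₀) →
    ∀ A : Set X, IsSubcontinuum A → x₀ ∈ A →
      ∃ B : ℕ → Set X, (∀ n, IsSubcontinuum (B n) ∧ x n ∈ B n) ∧
        Tendsto (fun n => hausdorffDist (B n) A) atTop (𝓝 0)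

/-- The hyperspace of nonblockers of `F₁(X)`, as a subset of the hyperspace of
nonempty compact subsets of `X` with the Hausdorff metric. -/
def NB (X : Type*) [MetricSpace X] : Set (NonemptyCompacts X) :=
  {A | ∀ x ∉ (A : Set X), Dense (kappa (A : Set X) ({x} : Set X))}

/-- The minimal nonblocker containing `x` (equal to `X` if `x` lies in no nonblocker). -/
def piSet (X : Type*) [MetricSpace X] (x : X) : Set X :=
  ⋂ A ∈ {A ∈ NB X | x ∈ (A : Set X)}, (A : Set X)

section Subcontinuum

variable {X : Type*} [TopologicalSpace X] {K L : Set X} {x z : X}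

lemma isSubcontinuum_singleton (x : X) : IsSubcontinuum {x} :=
  ⟨isCompact_singleton, isConnected_singleton⟩

lemma IsSubcontinuum.union (hK : IsSubcontinuum K) (hL : IsSubcontinuum L)
    (h : (K ∩ L).Nonempty) : IsSubcontinuum (K ∪ L) :=
  ⟨hK.1.union hL.1, hK.2.union h hL.2⟩

lemma isSubcontinuum_connectedComponentIn [T2Space X] (hK : IsCompact K) (hx : x ∈ K) :
    IsSubcontinuum (connectedComponentIn K x) := by
  refine ⟨?_, isConnected_connectedComponentIn_iff.2 hx⟩
  have : CompactSpace K := isCompact_iff_compactSpace.1 hK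
  rw [connectedComponentIn_eq_image hx]
  exact isClosed_connectedComponent.isCompact.image continuous_subtype_val

lemma exists_isClopen_of_connectedComponent_subset [T2Space X] [CompactSpace X] {U : Set X}
    (hU : IsOpen U) (h : connectedComponent x ⊆ U) : ∃ s, IsClopen s ∧ x ∈ s ∧ s ⊆ U := by
  have : Nonempty {s : Set X // IsClopen s ∧ x ∈ s} := ⟨⟨univ, isClopen_univ, mem_univ x⟩⟩
  rw [connectedComponent_eq_iInter_isClopen] at h
  obtain ⟨⟨s, hs, hxs⟩, hsU⟩ := exists_subset_nhds_of_isCompact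
    (V := fun s : {s : Set X // IsClopen s ∧ x ∈ s} => s.1)
    (fun s t => ⟨⟨s ∩ t, s.2.1.inter t.2.1, s.2.2, t.2.2⟩, inter_subset_left, inter_subset_right⟩)
    (fun s => s.2.1.isClosed.isCompact) fun y hy => hU.mem_nhds (h hy)
  exact ⟨s, hs, hxs, hsU⟩

/-- Boundary bumping. -/
lemma IsSubcontinuum.exists_inter_frontier_nonempty [T2Space X] {F : Set X}
    (hK : IsSubcontinuum K) (hF : IsClosed F) (hzK : z ∈ K) (hzF : z ∈ F) (hKF : ¬ K ⊆ F) :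
    ∃ D, IsSubcontinuum D ∧ D ⊆ K ∩ F ∧ z ∈ D ∧ (D ∩ frontier F).Nonempty := by
  have hcpt : IsCompact (K ∩ F) := hK.1.inter_right hF
  have hzKF : z ∈ K ∩ F := ⟨hzK, hzF⟩
  have hDKF := connectedComponentIn_subset (K ∩ F) z
  refine ⟨_, isSubcontinuum_connectedComponentIn hcpt hzKF, hDKF, mem_connectedComponentIn hzKF, ?_⟩
  by_contra hempty
  have hDint : connectedComponentIn (K ∩ F) z ⊆ interior F := fun y hy => by
    by_contra hyF
    exact hempty ⟨y, hy, subset_closure (hDKF hy).2, hyF⟩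
  rw [connectedComponentIn_eq_image hzKF, image_subset_iff] at hDint
  have : CompactSpace (K ∩ F : Set X) := isCompact_iff_compactSpace.1 hcpt
  obtain ⟨s, hs, hzs, hsF⟩ := exists_isClopen_of_connectedComponent_subset
    (isOpen_interior.preimage continuous_subtype_val) hDint
  obtain ⟨O, hO, rfl⟩ := isOpen_induced_iff.1 hs.isOpen
  have hclosed : IsClosed (K ∩ F ∩ O) := by
    rw [← Subtype.image_preimage_coe]
    exact (hs.isClosed.isCompact.image continuous_subtype_val).isClosed
  have hsub : K ∩ F ∩ O ⊆ O ∩ interior F := fun y hy => ⟨hy.2, hsF (a := ⟨y, hy.1⟩) hy.2⟩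
  -- `K ∩ F ∩ O` is clopen in `K`, contains `z` and is contained in `F`.
  obtain ⟨k, hkK, hkF⟩ := not_subset.1 hKF
  obtain ⟨y, hyK, hyO, hy⟩ := hK.2.isPreconnected (O ∩ interior F) (K ∩ F ∩ O)ᶜ
    (hO.inter isOpen_interior) hclosed.isOpen_compl
    (fun y _ => (em (y ∈ K ∩ F ∩ O)).imp (fun h => hsub h) id)
    ⟨z, hzK, hsub ⟨hzKF, hzs⟩⟩ ⟨k, hkK, fun h => hkF h.1.2⟩
  exact hy ⟨⟨hyK, interior_subset hyO.2⟩, hyO.1⟩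

lemma IsSubcontinuum.exists_inter_subset_singleton [T3Space X] {B : Set X}
    (hK : IsSubcontinuum K) (hB : B.Finite) (hx : x ∈ K) (hKB : ¬ K ⊆ B) :
    ∃ H, IsSubcontinuum H ∧ x ∈ H ∧ H ⊆ K ∧ H ∩ B ⊆ {x} ∧ ¬ H ⊆ B := by
  by_cases hxB : x ∈ B
  swap
  · exact ⟨{x}, isSubcontinuum_singleton x, rfl, singleton_subset_iff.2 hx, inter_subset_left,
      fun h => hxB (h rfl)⟩
  obtain ⟨k, hkK, hkB⟩ := not_subset.1 hKB
  have hnhds : (insert k (B \ {x}))ᶜ ∈ 𝓝 x := by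
    refine (hB.sdiff.insert k).isClosed.isOpen_compl.mem_nhds ?_
    rintro (rfl | h)
    exacts [hkB hxB, h.2 rfl]
  obtain ⟨F, hFx, hF, hFsub⟩ := exists_mem_nhds_isClosed_subset hnhds
  obtain ⟨H, hH, hHsub, hxH, h, hhH, hhF⟩ := hK.exists_inter_frontier_nonempty hF hx
    (mem_of_mem_nhds hFx) fun h => hFsub (h hkK) (mem_insert k _)
  have hHB : H ∩ B ⊆ {x} := fun a ha => by
    by_contra hax
    exact hFsub (hHsub ha.1).2 (Or.inr ⟨ha.2, hax⟩)
  refine ⟨H, hH, hxH, fun a ha => (hHsub ha).1, hHB, fun hHB' => hhF.2 ?_⟩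
  rw [show h = x from hHB ⟨hhH, hHB' hhH⟩]
  exact mem_interior_iff_mem_nhds.2 hFx

end Subcontinuum

section Kappa

variable {X : Type*} [TopologicalSpace X] {A B C : Set X} {x y z p : X}

lemma mem_kappa_singleton :
    y ∈ kappa C {x} ↔ ∃ L, IsSubcontinuum L ∧ x ∈ L ∧ y ∈ L ∧ L ⊆ Cᶜ := by
  simp only [kappa, mem_sUnion, mem_ofPred_eq, inter_singleton_nonempty]
  grind

lemma mem_kappa_self (hx : x ∉ C) : x ∈ kappa C {x} :=
  mem_kappa_singleton.2 ⟨{x}, isSubcontinuum_singleton x, rfl, rfl, by simpa⟩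

lemma mem_kappa_symm (h : y ∈ kappa C {x}) : x ∈ kappa C {y} := by
  obtain ⟨L, hL, hxL, hyL, hLC⟩ := mem_kappa_singleton.1 h
  exact mem_kappa_singleton.2 ⟨L, hL, hyL, hxL, hLC⟩

lemma mem_kappa_trans (hxy : y ∈ kappa C {x}) (hyz : z ∈ kappa C {y}) : z ∈ kappa C {x} := by
  obtain ⟨L, hL, hxL, hyL, hLC⟩ := mem_kappa_singleton.1 hxy
  obtain ⟨M, hM, hyM, hzM, hMC⟩ := mem_kappa_singleton.1 hyz
  exact mem_kappa_singleton.2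
    ⟨L ∪ M, hL.union hM ⟨y, hyL, hyM⟩, Or.inl hxL, Or.inr hzM, union_subset hLC hMC⟩

lemma kappa_subset_compl : kappa C B ⊆ Cᶜ := by
  rintro y ⟨L, ⟨-, -, hLC⟩, hy⟩
  exact hLC hy

lemma isConnected_kappa_singleton (hx : x ∉ C) : IsConnected (kappa C {x}) := by
  refine ⟨⟨x, mem_kappa_self hx⟩, isPreconnected_sUnion x _ ?_ ?_⟩
  · rintro L ⟨-, h, -⟩
    simpa using h
  · rintro L ⟨h, -, -⟩
    exact h.2.isPreconnected

lemma kappa_singleton_subset_of_disjoint (h : Disjoint (kappa C {x}) B) :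
    kappa C {x} ⊆ kappa B {x} := by
  intro y hy
  obtain ⟨L, hL, hxL, hyL, hLC⟩ := mem_kappa_singleton.1 hy
  exact mem_kappa_singleton.2 ⟨L, hL, hxL, hyL, fun a ha haB =>
    disjoint_left.1 h (mem_kappa_singleton.2 ⟨L, hL, hxL, ha, hLC⟩) haB⟩

lemma mem_closure_kappa_of_dense_sdiff_singleton [T3Space X]
    (hdense : Dense (kappa (B \ {p}) {z})) (hz : z ∉ B) (hnd : ¬ Dense (kappa B {z})) :
    p ∈ closure (kappa B {z}) := by
  obtain ⟨v, hv, hvB⟩ := not_subset.1 fun h => hnd (hdense.mono h)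
  obtain ⟨L, hL, hzL, hvL, hLB⟩ := mem_kappa_singleton.1 hv
  obtain ⟨a, haL, haB⟩ : (L ∩ B).Nonempty := not_disjoint_iff_nonempty_inter.1 fun h =>
    hvB (mem_kappa_singleton.2 ⟨L, hL, hzL, hvL, h.subset_compl_right⟩)
  obtain rfl : a = p := by
    by_contra hap
    exact hLB haL ⟨haB, hap⟩
  refine mem_closure_iff_nhds.2 fun V hV => ?_
  have hza : z ≠ a := fun h => hz (h ▸ haB)
  obtain ⟨N, hNa, hN, hNV⟩ :=
    exists_mem_nhds_isClosed_subset (inter_mem hV (compl_singleton_mem_nhds hza.symm))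
  have haN : a ∈ interior N := mem_interior_iff_mem_nhds.2 hNa
  obtain ⟨D, hD, hDsub, hzD, c, hcD, hcN⟩ := hL.exists_inter_frontier_nonempty
    isOpen_interior.isClosed_compl hzL (fun h => (hNV (interior_subset h)).2 rfl)
    fun h => h haL haN
  rw [frontier_compl] at hcN
  have hcV : c ∈ V := (hNV (closure_minimal interior_subset hN hcN.1)).1
  refine ⟨c, hcV, mem_kappa_singleton.2 ⟨D, hD, hzD, hcD, fun d hd hdB => ?_⟩⟩
  refine hLB (hDsub hd).1 ⟨hdB, ?_⟩
  rintro rfl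
  exact (hDsub hd).2 haN

/-- A set that does not block any point outside it: the condition defining `NB`, for arbitrary
sets. -/
def Nonblocking (B : Set X) : Prop :=
  ∀ x ∉ B, Dense (kappa B {x})

lemma Nonblocking.dense_compl (hB : Nonblocking B) (hne : B ≠ univ) : Dense Bᶜ := by
  obtain ⟨x, hx⟩ := (ne_univ_iff_exists_notMem B).1 hne
  exact (hB x hx).mono kappa_subset_compl

lemma Nonblocking.compl_subset_kappa_singleton (hA : Nonblocking A)
    (h : (interior (kappa A {z})).Nonempty) : Aᶜ ⊆ kappa A {z} := by
  intro w hw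
  obtain ⟨v, hv, hvw⟩ := (hA w hw).inter_open_nonempty _ isOpen_interior h
  exact mem_kappa_trans (interior_subset hv) (mem_kappa_symm hvw)

lemma exists_seq_pairwise_notMem_kappa [BaireSpace X] (hA : IsClosed A) (hdense : Dense Aᶜ)
    (hmeagre : ∀ x, IsMeagre (kappa A {x})) {T U : Set X} (hT : T.Countable)
    (hU : (interior U).Nonempty) :
    ∃ f : ℕ → X, (∀ n, f n ∈ U ∧ f n ∉ A ∧ ∀ t ∈ T, f n ∉ kappa A {t}) ∧
      Pairwise fun m n => f n ∉ kappa A {f m} := by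
  have : Std.Symm fun x y : X => y ∉ kappa A {x} := ⟨fun _ _ h h' => h (mem_kappa_symm h')⟩
  refine exists_seq_of_forall_finset_exists' (fun y => y ∈ U ∧ y ∉ A ∧ ∀ t ∈ T, y ∉ kappa A {t})
    (fun x y => y ∉ kappa A {x}) fun s _ => ?_
  have hopen : ¬ IsMeagre (interior U ∩ Aᶜ) :=
    not_isMeagre_of_isOpen (isOpen_interior.inter hA.isOpen_compl)
      (hdense.inter_open_nonempty _ isOpen_interior hU)
  have hclasses : IsMeagre (⋃ t ∈ T ∪ s, kappa A {t}) :=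
    isMeagre_biUnion (hT.union s.countable_toSet) fun t _ => hmeagre t
  obtain ⟨y, ⟨hyU, hyA⟩, hy⟩ := not_subset.1 fun h => hopen (hclasses.mono h)
  simp only [mem_iUnion, not_exists] at hy
  exact ⟨y, ⟨interior_subset hyU, hyA, fun t ht => hy t (Or.inl ht)⟩, fun x hx => hy x (Or.inr hx)⟩

/-- A witness that `B` is a minimal blocking set: `B` blocks `z`, but no longer blocks any point
once one of its own points is removed. -/
structure IsMinimalBlockerAt (B : Set X) (z : X) : Prop where
  notMem : z ∉ B
  not_dense : ¬ Dense (kappa B {z})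
  nonblocking_sdiff_singleton : ∀ q ∈ B, Nonblocking (B \ {q})

lemma exists_isMinimalBlockerAt (hB : ¬ Nonblocking B)
    (h : ∀ q ∈ B, Nonblocking (B \ {q})) : ∃ z, IsMinimalBlockerAt B z := by
  simp only [Nonblocking, not_forall] at hB
  obtain ⟨z, hz, hnd⟩ := hB
  exact ⟨z, hz, hnd, h⟩

lemma IsMinimalBlockerAt.subset_closure_kappa [T3Space X] (h : IsMinimalBlockerAt B z) :
    B ⊆ closure (kappa B {z}) := fun q hq =>
  mem_closure_kappa_of_dense_sdiff_singleton
    (h.nonblocking_sdiff_singleton q hq z fun hz => h.notMem hz.1) h.notMem h.not_dense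

end Kappa

section Meagre

variable {X : Type*} [MetricSpace X] [CompactSpace X] {A : Set X} {x y z : X}

lemma kappa_singleton_eq_iUnion_connectedComponentIn (hA : IsClosed A) :
    kappa A {z} = ⋃ n : ℕ, connectedComponentIn (thickening (1 / (n + 1)) A)ᶜ z := by
  ext w
  rw [mem_kappa_singleton, mem_iUnion]
  constructor
  · rintro ⟨L, hL, hzL, hwL, hLA⟩
    obtain ⟨δ, hδ, hdisj⟩ := (disjoint_left.2 hLA).exists_thickenings hL.1 hA
    obtain ⟨n, hn⟩ := exists_nat_one_div_lt hδ
    have hLn : L ⊆ (thickening (1 / (n + 1)) A)ᶜ :=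
      (hdisj.mono (self_subset_thickening hδ L) (thickening_mono hn.le A)).subset_compl_right
    exact ⟨n, hL.2.isPreconnected.subset_connectedComponentIn hzL hLn hwL⟩
  · rintro ⟨n, hw⟩
    have hz : z ∈ (thickening (1 / (n + 1)) A)ᶜ := connectedComponentIn_nonempty_iff.1 ⟨w, hw⟩
    exact ⟨_, isSubcontinuum_connectedComponentIn isOpen_thickening.isClosed_compl.isCompact hz,
      mem_connectedComponentIn hz, hw, (connectedComponentIn_subset _ z).trans
        (compl_subset_compl.2 (self_subset_thickening Nat.one_div_pos_of_nat A))⟩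

lemma isMeagre_kappa_singleton_of_interior_eq_empty (hA : IsClosed A)
    (hint : interior (kappa A {z}) = ∅) : IsMeagre (kappa A {z}) := by
  rw [kappa_singleton_eq_iUnion_connectedComponentIn hA] at hint ⊢
  refine isMeagre_iUnion fun n => ?_
  by_cases hz : z ∈ (thickening (1 / ((n : ℝ) + 1)) A)ᶜ
  · have hclosed := (isSubcontinuum_connectedComponentIn
      isOpen_thickening.isClosed_compl.isCompact hz).1.isClosed
    refine (hclosed.isNowhereDense_iff.2 (subset_empty_iff.1 ?_)).isMeagre
    rw [← hint]
    exact interior_mono (subset_iUnion_of_subset n Subset.rfl)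
  · rw [connectedComponentIn_eq_empty hz]
    exact IsMeagre.empty

lemma Nonblocking.isMeagre_kappa_singleton (hA : Nonblocking A) (hAc : IsClosed A) (hx : x ∉ A)
    (hy : y ∉ A) (hxy : y ∉ kappa A {x}) (z : X) : IsMeagre (kappa A {z}) := by
  refine isMeagre_kappa_singleton_of_interior_eq_empty hAc
    (not_nonempty_iff_eq_empty.1 fun h => hxy ?_)
  have hAz := hA.compl_subset_kappa_singleton h
  exact mem_kappa_trans (mem_kappa_symm (hAz hx)) (hAz hy)

end Meagre

section Kelley

variable {X : Type*} [MetricSpace X] {A B C D : Set X} {u x y z : X}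

lemma KelleyProp.exists_isSubcontinuum (hkel : KelleyProp X) {S L U V : Set X}
    (hL : IsSubcontinuum L) (hyL : y ∈ L) (hyS : y ∈ closure S) (hU : IsOpen U) (hLU : L ⊆ U)
    (hx : x ∈ L) (hV : V ∈ 𝓝 x) :
    ∃ M, IsSubcontinuum M ∧ (M ∩ S).Nonempty ∧ (M ∩ V).Nonempty ∧ M ⊆ U := by
  obtain ⟨s, hs, hslim⟩ := mem_closure_iff_seq_limit.1 hyS
  obtain ⟨M, hM, hMlim⟩ := hkel s y hslim L hL hyL
  obtain ⟨δ, hδ, hδU⟩ := hL.1.exists_thickening_subset_open hU hLU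
  obtain ⟨ε, hε, hεV⟩ := Metric.mem_nhds_iff.1 hV
  obtain ⟨n, hn⟩ := (hMlim.eventually_lt_const (lt_min hδ hε)).exists
  have hfin := hausdorffEDist_ne_top_of_nonempty_of_bounded (hM n).1.2.nonempty hL.2.nonempty
    (hM n).1.1.isBounded hL.1.isBounded
  obtain ⟨x', hx', hdist⟩ :=
    exists_dist_lt_of_hausdorffDist_lt' hx (hn.trans_le (min_le_right _ _)) hfin
  refine ⟨M n, (hM n).1, ⟨s n, (hM n).2, hs n⟩, ⟨x', hx', hεV hdist⟩, fun a ha => hδU ?_⟩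
  obtain ⟨l, hl, hal⟩ :=
    exists_dist_lt_of_hausdorffDist_lt ha (hn.trans_le (min_le_left _ _)) hfin
  exact mem_thickening_iff.2 ⟨l, hl, hal⟩

lemma KelleyProp.kappa_subset_closure (hkel : KelleyProp X) (hC : IsClosed C)
    (hy : y ∈ closure (kappa C {z})) : kappa C {y} ⊆ closure (kappa C {z}) := by
  intro v hv
  obtain ⟨L, hL, hyL, hvL, hLC⟩ := mem_kappa_singleton.1 hv
  refine mem_closure_iff_nhds.2 fun V hV => ?_
  obtain ⟨M, hM, ⟨s, hsM, hs⟩, ⟨w, hwM, hwV⟩, hMC⟩ :=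
    hkel.exists_isSubcontinuum hL hyL hy hC.isOpen_compl hLC hvL hV
  exact ⟨w, hwV, mem_kappa_trans hs (mem_kappa_singleton.2 ⟨M, hM, hsM, hwM, hMC⟩)⟩

lemma KelleyProp.notMem_closure_kappa (hkel : KelleyProp X) (hA : Nonblocking A)
    (hB : IsClosed B) (hnd : ¬ Dense (kappa B {z})) (hyA : y ∉ A)
    (hyB : ∀ q ∈ B, y ∉ kappa A {q}) : y ∉ closure (kappa B {z}) := by
  intro hy
  have hsub : kappa A {y} ⊆ kappa B {y} := kappa_singleton_subset_of_disjoint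
    (disjoint_left.2 fun a ha haB => hyB a haB (mem_kappa_symm ha))
  exact hnd (dense_closure.1 ((hA y hyA).mono (hsub.trans (hkel.kappa_subset_closure hB hy))))

lemma IsMinimalBlockerAt.of_mem_closure_kappa (h : IsMinimalBlockerAt B z) (hkel : KelleyProp X)
    (hB : IsClosed B) (hu : u ∈ closure (kappa B {z})) (huB : u ∉ B) : IsMinimalBlockerAt B u where
  notMem := huB
  not_dense hd := h.not_dense (dense_closure.1 (hd.mono (hkel.kappa_subset_closure hB hu)))
  nonblocking_sdiff_singleton := h.nonblocking_sdiff_singleton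

lemma IsMinimalBlockerAt.subset_closure_kappa_of_inter_subset [CompactSpace X]
    (h : IsMinimalBlockerAt B z) (hkel : KelleyProp X) (hB : B.Finite)
    (hD : closure (kappa B {z}) ∩ D ⊆ B) (hu : u ∈ closure (kappa B {z})) (huD : u ∉ D) :
    B ⊆ closure (kappa D {u}) := by
  have hR : IsSubcontinuum (closure (kappa B {z})) :=
    ⟨isClosed_closure.isCompact, (isConnected_kappa_singleton h.notMem).closure⟩
  obtain ⟨H, hH, huH, hHR, hHB, hHnB⟩ := hR.exists_inter_subset_singleton hB hu
    fun hRB => h.notMem (hRB (subset_closure (mem_kappa_self h.notMem)))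
  obtain ⟨w, hwH, hwB⟩ := not_subset.1 hHnB
  have hHD : H ⊆ Dᶜ := fun a ha haD => by
    obtain rfl : a = u := hHB ⟨ha, hD ⟨hHR ha, haD⟩⟩
    exact huD haD
  have hdisj : Disjoint (kappa B {w}) D := disjoint_left.2 fun a ha haD =>
    kappa_subset_compl ha (hD ⟨hkel.kappa_subset_closure hB.isClosed (hHR hwH) ha, haD⟩)
  have hsub : kappa B {w} ⊆ kappa D {u} := fun v hv =>
    mem_kappa_trans (mem_kappa_singleton.2 ⟨H, hH, huH, hwH, hHD⟩)
      (kappa_singleton_subset_of_disjoint hdisj hv)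
  exact (h.of_mem_closure_kappa hkel hB.isClosed (hHR hwH) hwB).subset_closure_kappa.trans
    (closure_mono hsub)

lemma IsMinimalBlockerAt.subset_closure_kappa_of_mem_closure [CompactSpace X]
    (h : IsMinimalBlockerAt B z) (hkel : KelleyProp X) (hB : B.Finite) (hDc : IsClosed D)
    (hD : closure (kappa B {z}) ∩ D ⊆ B) (hu : u ∈ closure (kappa B {z}))
    (hux : u ∈ closure (kappa D {x})) (huD : u ∉ D) : B ⊆ closure (kappa D {x}) :=
  (h.subset_closure_kappa_of_inter_subset hkel hB hD hu huD).trans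
    (closure_minimal (hkel.kappa_subset_closure hDc hux) isClosed_closure)

lemma KelleyProp.not_eventually_isMinimalBlockerAt [CompactSpace X] (hkel : KelleyProp X)
    (hA : Nonblocking A) (hAc : IsClosed A) (hdense : Dense Aᶜ)
    (hmeagre : ∀ x, IsMeagre (kappa A {x})) (hC : C.Finite) (p b : X) :
    ¬ ∀ᶠ q in 𝓝 p ×ˢ 𝓝 b, ∃ z, IsMinimalBlockerAt (insert q.2 (insert q.1 C)) z := by
  intro hmin
  obtain ⟨z, hz⟩ := (nhds_prod_eq (x := p) (y := b) ▸ hmin).self_of_nhds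
  obtain ⟨U, hU, V, hV, hUV⟩ := mem_prod_iff.1 hmin
  set B := insert b (insert p C)
  have hB : B.Finite := (hC.insert p).insert b
  obtain ⟨p', hp'U, hp'z⟩ := mem_closure_iff_nhds.1
    (hz.subset_closure_kappa (Or.inr (Or.inl rfl))) U hU
  obtain ⟨f, hf, hfpair⟩ := exists_seq_pairwise_notMem_kappa hAc hdense hmeagre
    (hB.insert p').countable ⟨b, mem_interior_iff_mem_nhds.2 hV⟩
  choose w hw using fun n => hUV (mk_mem_prod hp'U (hf n).1)
  let E n := insert (f n) (insert p' C)
  let R n := closure (kappa (E n) {w n})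
  have hE n : (E n).Finite := (hC.insert p').insert (f n)
  have hfB n : f n ∉ closure (kappa B {z}) :=
    hkel.notMem_closure_kappa hA hB.isClosed hz.not_dense (hf n).2.1
      fun q hq => (hf n).2.2 q (Or.inr hq)
  have hfR {m n} (hmn : m ≠ n) : f m ∉ R n := by
    refine hkel.notMem_closure_kappa hA (hE n).isClosed (hw n).not_dense (hf m).2.1 ?_
    rintro q (rfl | rfl | hq)
    exacts [hfpair hmn.symm, (hf m).2.2 q (Or.inl rfl),
      (hf m).2.2 q (Or.inr (Or.inr (Or.inr hq)))]
  have hmeet n : ∃ q : B, (q : X) ∈ R n ∧ (q : X) ∉ E n := by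
    by_contra! hsub
    exact hfB n ((hw n).subset_closure_kappa_of_mem_closure hkel (hE n) hB.isClosed
      (fun q hq => hsub ⟨q, hq.2⟩ hq.1) ((hw n).subset_closure_kappa (Or.inr (Or.inl rfl)))
      (subset_closure hp'z) (kappa_subset_compl hp'z) (Or.inl rfl))
  choose q hqR hqE using hmeet
  have : Finite B := hB
  obtain ⟨m, n, hmn, hq⟩ := Finite.exists_ne_map_eq_of_infinite q
  have hinter : R m ∩ E n ⊆ E m := by
    rintro a ⟨ha, rfl | haC⟩
    exacts [(hfR hmn.symm ha).elim, Or.inr haC]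
  exact hfR hmn ((hw m).subset_closure_kappa_of_mem_closure hkel (hE m) (hE n).isClosed hinter
    (hq ▸ hqR m) (hqR n) (hqE n) (Or.inl rfl))

end Kelley

section Hyperspace

variable {X : Type*} [MetricSpace X] {A B C : Set X} {p b : X}

lemma eventually_not_nonblocking_insert_insert (hcl : IsClosed (NB X)) (hC : IsCompact C)
    (h : ¬ Nonblocking (insert b (insert p C))) :
    ∀ᶠ q in 𝓝 p ×ˢ 𝓝 b, ¬ Nonblocking (insert q.2 (insert q.1 C)) := by
  let K : Compacts X := ⟨C, hC⟩
  let N (q : X × X) : NonemptyCompacts X :=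
    ⟨{q.2} ⊔ ({q.1} ⊔ K), q.2, Or.inl rfl⟩
  have hN : Continuous N := by
    refine NonemptyCompacts.isOpenEmbedding_toCompacts.isInducing.continuous_iff.2 ?_
    exact (Compacts.continuous_singleton.comp continuous_snd).sup
      ((Compacts.continuous_singleton.comp continuous_fst).sup continuous_const)
  rw [← nhds_prod_eq]
  exact (hcl.isOpen_compl.preimage hN).mem_nhds h

lemma KelleyProp.nonblocking_of_finite [CompactSpace X] (hkel : KelleyProp X)
    (hsing : ∀ x : X, Nonblocking {x}) (hcl : IsClosed (NB X))
    (hA : Nonblocking A) (hAc : IsClosed A) (hdense : Dense Aᶜ)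
    (hmeagre : ∀ x, IsMeagre (kappa A {x})) (hB : B.Finite) (hne : B.Nonempty) :
    Nonblocking B := by
  induction hn : B.ncard using Nat.strong_induction_on generalizing B with
  | _ n ih =>
  obtain ⟨x, rfl⟩ | ⟨b, hb, p, hp, hbp⟩ := hne.exists_eq_singleton_or_nontrivial
  · exact hsing x
  by_contra hblock
  set C := B \ {b, p}
  have hC : C.Finite := hB.sdiff
  have hBeq : insert b (insert p C) = B := by grind
  have hcard : C.ncard + 2 = n := by
    rw [← hn, ← hBeq, ncard_insert_of_notMem (by grind) (hC.insert p),
      ncard_insert_of_notMem (by grind) hC]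
  refine hkel.not_eventually_isMinimalBlockerAt hA hAc hdense hmeagre hC p b ?_
  have hne : ∀ᶠ q in 𝓝 p ×ˢ 𝓝 b, q.2 ≠ q.1 := by
    rw [← nhds_prod_eq]
    exact (continuous_snd.continuousAt.ne_iff_eventually_ne continuous_fst.continuousAt).1 hbp
  filter_upwards [eventually_not_nonblocking_insert_insert hcl hC.isCompact (hBeq ▸ hblock), hne]
    with ⟨p', b'⟩ hblock' (hne' : b' ≠ p')
  have hfin : (insert b' (insert p' C)).Finite := (hC.insert p').insert b'
  refine exists_isMinimalBlockerAt hblock' fun q hq => ih _ ?_ hfin.sdiff ?_ rfl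
  · calc (insert b' (insert p' C) \ {q}).ncard < (insert b' (insert p' C)).ncard :=
          ncard_sdiff_singleton_lt_of_mem hq hfin
      _ ≤ n := by
          rw [← hcard]
          exact (ncard_insert_le _ _).trans (Nat.add_le_add_right (ncard_insert_le _ _) 1)
  · by_cases hqb : b' = q
    · exact ⟨p', Or.inr (Or.inl rfl), fun h => hne' (hqb.trans h.symm)⟩
    · exact ⟨b', Or.inl rfl, hqb⟩

lemma NB_eq_univ_of_finite (hcl : IsClosed (NB X))
    (hfin : ∀ B : Set X, B.Finite → B.Nonempty → Nonblocking B) : NB X = univ :=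
  hcl.closure_eq.symm.trans <| Dense.closure_eq <|
    NonemptyCompacts.dense_setOfPred_finite.mono fun K hK => hfin K hK K.nonempty

lemma subsingleton_of_NB_eq_univ [CompactSpace X] (h : NB X = univ) : Subsingleton X := by
  refine ⟨fun x y => by_contra fun hxy => ?_⟩
  obtain ⟨K, hKx, hK, hKy⟩ := exists_mem_nhds_isClosed_subset (compl_singleton_mem_nhds hxy)
  have hKnb : Nonblocking K :=
    h.ge (mem_univ (⟨⟨K, hK.isCompact⟩, x, mem_of_mem_nhds hKx⟩ : NonemptyCompacts X))
  have hint : interior K = ∅ := interior_eq_empty_iff_dense_compl.2 <|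
    hKnb.dense_compl <| (ne_univ_iff_exists_notMem K).2 ⟨y, fun hy => hKy hy rfl⟩
  exact (hint ▸ mem_interior_iff_mem_nhds.2 hKx : x ∈ (∅ : Set X))

end Hyperspace

theorem stmt_12_general {X : Type*} [MetricSpace X] [CompactSpace X]
    (hkel : KelleyProp X)
    (hsing : ∀ A : NonemptyCompacts X, (∃ x : X, (A : Set X) = {x}) → A ∈ NB X)
    (hcl : IsClosed (NB X)) (A : NonemptyCompacts X) (hA : A ∈ NB X) :
    ∀ x ∉ (A : Set X), ∀ y ∉ (A : Set X),
      ∃ L : Set X, IsSubcontinuum L ∧ x ∈ L ∧ y ∈ L ∧ L ⊆ (A : Set X)ᶜ := by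
  intro x hx y hy
  rw [← mem_kappa_singleton]
  by_contra hxy
  have hAnb : Nonblocking (A : Set X) := hA
  have hAc : IsClosed (A : Set X) := A.isCompact.isClosed
  have hdense : Dense (A : Set X)ᶜ :=
    hAnb.dense_compl ((ne_univ_iff_exists_notMem _).2 ⟨x, hx⟩)
  have hmeagre := hAnb.isMeagre_kappa_singleton hAc hx hy hxy
  have hsing' (a : X) : Nonblocking ({a} : Set X) := hsing {a} ⟨a, rfl⟩
  have hNB : NB X = univ := NB_eq_univ_of_finite hcl fun _ hB hBne =>
    hkel.nonblocking_of_finite hsing' hcl hAnb hAc hdense hmeagre hB hBne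
  have := subsingleton_of_NB_eq_univ hNB
  exact hxy (Subsingleton.elim x y ▸ mem_kappa_self hx)

theorem stmt_12 {X : Type*} [MetricSpace X] [CompactSpace X] [ConnectedSpace X] [Nonempty X]
    (hdec : Decomposable X) (hkel : KelleyProp X)
    (hsing : ∀ A : NonemptyCompacts X, (∃ x : X, (A : Set X) = {x}) → A ∈ NB X)
    (hcpt : IsCompact (NB X))
    (A : NonemptyCompacts X) (hA : A ∈ NB X) :
    ∀ x ∉ (A : Set X), ∀ y ∉ (A : Set X),
      ∃ L : Set X, IsSubcontinuum L ∧ x ∈ L ∧ y ∈ L ∧ L ⊆ (A : Set X)ᶜ :=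
  stmt_12_general hkel hsing hcpt.isClosed A hA
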